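/- The two 10-vertex graphs from the counterexample are not isomorphic: there is no bijection P : [10] → [10] preserving both the edge relation and the coloring. Here G₁ has edges from vertex 1 to each of 2,3,4,5; edges (2,6),(2,7),(3,7),(3,8),(4,8),(4,9),(5,9),(5,6); and edges from each of 6,7,8,9 to 10. G₂ has the same edges except the middle layer is (2,6),(2,7),(3,6),(3,7),(4,8),(4,9),(5,8),(5,9). The coloring assigns color a to vertices 2,3,4,5, color b to vertices 6,7,8,9, and distinct colors to vertices 1 and 10. -/

import Mathlib

/-- Edges of the first counterexample graph (0-based vertex names: paper's
vertex `v` is `v - 1` here).  Middle layer forms a single 8-cycle. -/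
def L1 : List (ℕ × ℕ) :=
  [(0,1),(0,2),(0,3),(0,4),
   (1,5),(1,6),(2,6),(2,7),(3,7),(3,8),(4,8),(4,5),
   (5,9),(6,9),(7,9),(8,9)]

/-- Edges of the second counterexample graph: middle layer forms two
complete bipartite components. -/
def L2 : List (ℕ × ℕ) :=
  [(0,1),(0,2),(0,3),(0,4),
   (1,5),(1,6),(2,5),(2,6),(3,7),(3,8),(4,7),(4,8),
   (5,9),(6,9),(7,9),(8,9)]

def E1 : Fin 10 → Fin 10 → Bool := fun i j => decide ((i.val, j.val) ∈ L1)
def E2 : Fin 10 → Fin 10 → Bool := fun i j => decide ((i.val, j.val) ∈ L2)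

/-- Coloring: vertex 1 gets color 0, vertex 10 gets color 1,
vertices 2–5 get color 2, vertices 6–9 get color 3. -/
def c10 : Fin 10 → ℕ := fun i =>
  if i.val = 0 then 0 else if i.val = 9 then 1 else if i.val < 5 then 2 else 3

/-- A relation is difunctional when any two left elements with a common image have the same images.
Equivalently, its graph is a union of rectangles `A × B` with disjoint `A`s and disjoint `B`s; this
is the invariant that separates `E1` from `E2`. -/
def IsDifunctional {α β : Type*} (r : α → β → Prop) : Prop :=
  ∀ ⦃x y u v⦄, r x u → r x v → r y v → r y u

theorem isDifunctional_eq (α : Type*) : IsDifunctional (@Eq α) :=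
  fun _ _ _ _ hxu hxv hyv ↦ (hyv.trans hxv.symm).trans hxu

theorem IsDifunctional.of_map_iff {α β γ δ : Type*} {r : α → β → Prop} {s : γ → δ → Prop}
    (hr : IsDifunctional r) (f : γ → α) (g : δ → β) (h : ∀ c d, s c d ↔ r (f c) (g d)) :
    IsDifunctional s := by
  intro x y u v hxu hxv hyv
  exact (h y u).2 (hr ((h x u).1 hxu) ((h x v).1 hxv) ((h y v).1 hyv))

/-- The complete bipartite piece of `E2` that the edges leaving a vertex belong to. The pieces are
numbered `0` to `3`; the sink `9`, which no edge leaves, gets the spare label `4`. -/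
def outPiece : Fin 10 → ℕ := ![0, 1, 1, 2, 2, 3, 3, 3, 3, 4]

/-- The complete bipartite piece of `E2` that the edges entering a vertex belong to, with the
numbering of `outPiece`. The source `0` gets the label `5`, which is no value of `outPiece`. -/
def inPiece : Fin 10 → ℕ := ![5, 0, 0, 0, 0, 1, 1, 2, 2, 3]

theorem E2_iff_outPiece_eq_inPiece : ∀ i j, E2 i j ↔ outPiece i = inPiece j := by
  decide

theorem isDifunctional_E2 : IsDifunctional fun i j ↦ E2 i j :=
  (isDifunctional_eq ℕ).of_map_iff outPiece inPiece E2_iff_outPiece_eq_inPiece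

theorem not_isDifunctional_E1 : ¬ IsDifunctional fun i j ↦ E1 i j := by
  intro h
  -- The path `5 ← 1 → 6 ← 2` of the 8-cycle has no closing edge `2 → 5`.
  have h25 : E1 2 5 := h (x := 1) (v := 6) (by decide) (by decide) (by decide)
  exact absurd h25 (by decide)

theorem counterexample_not_isomorphic_general :
    ¬ ∃ f : Fin 10 → Fin 10, ∀ i j, E1 i j ↔ E2 (f i) (f j) := by
  rintro ⟨f, hf⟩
  exact not_isDifunctional_E1 (isDifunctional_E2.of_map_iff f f hf)

theorem counterexample_not_isomorphic :
    ¬ ∃ P : Equiv (Fin 10) (Fin 10),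
        (∀ i j, E1 i j ↔ E2 (P i) (P j)) ∧ (∀ i, c10 i = c10 (P i)) := by
  rintro ⟨P, hE, _⟩
  exact counterexample_not_isomorphic_general ⟨P, hE⟩
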